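/- arXiv:math/0305190 — 2 statements merged into one kernel-verified Lean document; each statement's English description precedes it below -/
import Mathlib

section
/- Let [b_1,…,b_ρ] be a sequence of integers with all b_i ≥ 2, and let α_1,…,α_ρ be its log discrepancies. Then [b_1,…,b_ρ] is a T-chain if and only if α_1 + α_ρ = 1. -/
/-!
The recursion `α_{i-1} = b_i α_i - α_{i+1}` and the continued fraction `[b_1,…,b_ρ] = n/q` are both
governed by the product of the matrices `!![b_i, -1; 1, 0]`. This product has determinant `1` and
equals `!![n, -p; q, -r]`, where `n/p = [b_ρ,…,b_1]`. Hence `p` is the inverse of `q` modulo `n`,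
and the boundary conditions give `n α_1 = q + 1` and `n α_ρ = p + 1`, so that `α_1 + α_ρ = 1` means
`q + p + 2 = n`. On the other side, multiplying `(q + 1)²` by `p` shows that `n ∣ (q + 1)²` amounts
to `n ∣ q + p + 2`. As `0 ≤ q, p < n`, the latter leaves only `q + p + 2 = n` and
`q = p = n - 1`, and the second case is the one excluded from T-fractions.
-/

/-- Hirzebruch–Jung continued fraction: `hj [b] = b`, `hj (b :: l) = b - 1 / hj l`. -/
def hj : List ℚ → ℚ
  | [] => 0
  | b :: l => b - 1 / hj l

/-- `n/q` (with `n > q ≥ 1` coprime) is a T-fraction if `n ∣ (q+1)²` and `q ≠ n-1`. -/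
def IsTFraction (n q : ℕ) : Prop :=
  1 ≤ q ∧ q < n ∧ Nat.Coprime n q ∧ n ∣ (q + 1) ^ 2 ∧ q ≠ n - 1

/-- A sequence of integers `≥ 2` is a T-chain if its Hirzebruch–Jung value
equals `n/q` for some T-fraction `n/q`. -/
def IsTChain (L : List ℤ) : Prop :=
  (∀ b ∈ L, 2 ≤ b) ∧
  ∃ n q : ℕ, IsTFraction n q ∧ hj (L.map (fun b => (b : ℚ))) = (n : ℚ) / (q : ℚ)

/-- `α : ℕ → ℚ` records the log discrepancies `α_1,…,α_ρ` of the chain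
`[b_1,…,b_ρ]` (where `b_i = L[i-1]`): `α_0 = α_{ρ+1} = 1` and
`α_{i−1} + α_{i+1} = b_i·α_i` for `1 ≤ i ≤ ρ`. -/
def IsLogDisc (L : List ℤ) (α : ℕ → ℚ) : Prop :=
  α 0 = 1 ∧ α (L.length + 1) = 1 ∧
  ∀ (i : ℕ) (h : i < L.length),
    α i + α (i + 2) = ((L.get ⟨i, h⟩ : ℤ) : ℚ) * α (i + 1)

open Matrix

/-- The product of the matrices `!![b, -1; 1, 0]` over the entries `b` of `L`. It carries
`(α_ρ, α_{ρ+1})` to `(α_0, α_1)` for every solution `α` of `α_{i-1} + α_{i+1} = b_i α_i`. -/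
def transferMatrix (L : List ℤ) : Matrix (Fin 2) (Fin 2) ℤ :=
  (L.map fun b => !![b, -1; 1, 0]).prod

/-- The numerator of the Hirzebruch–Jung continued fraction of `L`, with value `1` on `[]`. -/
def hjNum (L : List ℤ) : ℤ := transferMatrix L 0 0

/-- The denominator of the Hirzebruch–Jung continued fraction of `L`, with value `0` on `[]`. -/
def hjDen (L : List ℤ) : ℤ := transferMatrix L 1 0

section TransferMatrix

@[simp]
theorem transferMatrix_nil : transferMatrix [] = 1 := rfl

theorem transferMatrix_cons (b : ℤ) (L : List ℤ) :
    transferMatrix (b :: L) = !![b, -1; 1, 0] * transferMatrix L := by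
  simp [transferMatrix]

theorem transferMatrix_append (L L' : List ℤ) :
    transferMatrix (L ++ L') = transferMatrix L * transferMatrix L' := by
  simp [transferMatrix]

theorem det_transferMatrix (L : List ℤ) : (transferMatrix L).det = 1 := by
  induction L with
  | nil => simp
  | cons b L ih => rw [transferMatrix_cons, det_mul, ih, det_fin_two_of]; ring

theorem transferMatrix_reverse (L : List ℤ) :
    transferMatrix L.reverse =
      !![transferMatrix L 0 0, -transferMatrix L 1 0;
        -transferMatrix L 0 1, transferMatrix L 1 1] := by
  induction L with
  | nil => simp [one_fin_two]
  | cons b L ih =>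
    rw [List.reverse_cons, transferMatrix_append, ih, transferMatrix_cons b L,
      transferMatrix_cons b [], transferMatrix_nil, mul_one]
    ext i j
    fin_cases i <;> fin_cases j <;>
      simp [mul_apply, Fin.sum_univ_two, mul_comm, add_comm]

theorem transferMatrix_map_mulVec {R : Type*} [Ring R] (L : List ℤ) (α : ℕ → R)
    (hα : ∀ (i : ℕ) (h : i < L.length), α i + α (i + 2) = (L[i] : R) * α (i + 1)) :
    (transferMatrix L).map (Int.cast : ℤ → R) *ᵥ ![α L.length, α (L.length + 1)] =
      ![α 0, α 1] := by
  induction L generalizing α with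
  | nil => simp
  | cons b L ih =>
    have tail : (transferMatrix L).map (Int.cast : ℤ → R) *ᵥ
        ![α (L.length + 1), α (L.length + 2)] = ![α 1, α 2] :=
      ih (fun i => α (i + 1)) fun i h => hα (i + 1) (Nat.succ_lt_succ h)
    have head : α 0 + α 2 = b * α 1 := hα 0 (Nat.succ_pos _)
    rw [transferMatrix_cons, map_mul_intCast, ← mulVec_mulVec, List.length_cons, tail]
    ext i
    fin_cases i <;> simp [mulVec, dotProduct, ← head]

end TransferMatrix

section ContinuedFraction

@[simp]
theorem hjNum_nil : hjNum [] = 1 := rfl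

@[simp]
theorem hjDen_nil : hjDen [] = 0 := rfl

theorem hjNum_cons (b : ℤ) (L : List ℤ) : hjNum (b :: L) = b * hjNum L - hjDen L := by
  simp [hjNum, hjDen, transferMatrix_cons, mul_apply, Fin.sum_univ_two, sub_eq_add_neg]

theorem hjDen_cons (b : ℤ) (L : List ℤ) : hjDen (b :: L) = hjNum L := by
  simp [hjNum, hjDen, transferMatrix_cons, mul_apply, Fin.sum_univ_two]

theorem hjNum_reverse (L : List ℤ) : hjNum L.reverse = hjNum L := by
  simp [hjNum, transferMatrix_reverse]

theorem hjDen_reverse (L : List ℤ) : hjDen L.reverse = -transferMatrix L 0 1 := by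
  simp [hjDen, transferMatrix_reverse]

theorem hjDen_mul_hjDen_reverse (L : List ℤ) :
    hjDen L * hjDen L.reverse = 1 - hjNum L * transferMatrix L 1 1 := by
  have det := det_transferMatrix L
  rw [det_fin_two] at det
  rw [hjDen_reverse, hjNum, hjDen]
  linear_combination det

theorem isCoprime_hjNum_hjDen (L : List ℤ) : IsCoprime (hjNum L) (hjDen L) :=
  ⟨transferMatrix L 1 1, hjDen L.reverse, by linear_combination hjDen_mul_hjDen_reverse L⟩

variable {L : List ℤ}

theorem hjDen_nonneg_and_lt_hjNum (hL : ∀ b ∈ L, 2 ≤ b) :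
    0 ≤ hjDen L ∧ hjDen L < hjNum L := by
  induction L with
  | nil => simp
  | cons b L ih =>
    obtain ⟨hb, hL⟩ := List.forall_mem_cons.mp hL
    obtain ⟨den_nonneg, den_lt⟩ := ih hL
    rw [hjDen_cons, hjNum_cons]
    constructor <;> nlinarith

theorem hjDen_nonneg (hL : ∀ b ∈ L, 2 ≤ b) : 0 ≤ hjDen L :=
  (hjDen_nonneg_and_lt_hjNum hL).1

theorem hjDen_lt_hjNum (hL : ∀ b ∈ L, 2 ≤ b) : hjDen L < hjNum L :=
  (hjDen_nonneg_and_lt_hjNum hL).2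

theorem hjNum_pos (hL : ∀ b ∈ L, 2 ≤ b) : 0 < hjNum L :=
  (hjDen_nonneg hL).trans_lt (hjDen_lt_hjNum hL)

theorem hjDen_pos (hL : ∀ b ∈ L, 2 ≤ b) (hne : L ≠ []) : 0 < hjDen L := by
  obtain ⟨b, L, rfl⟩ := List.exists_cons_of_ne_nil hne
  rw [hjDen_cons]
  exact hjNum_pos (List.forall_mem_cons.mp hL).2

theorem hj_map_intCast (hL : ∀ b ∈ L, 2 ≤ b) :
    hj (L.map Int.cast) = hjNum L / hjDen L := by
  induction L with
  | nil => simp [hj]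
  | cons b L ih =>
    obtain ⟨-, hL⟩ := List.forall_mem_cons.mp hL
    have num_ne_zero : (hjNum L : ℚ) ≠ 0 := mod_cast (hjNum_pos hL).ne'
    rw [List.map_cons, hj, ih hL, one_div_div, hjNum_cons, hjDen_cons]
    push_cast
    field_simp

end ContinuedFraction

section TFraction

theorem dvd_add_one_sq_iff_of_dvd_mul_sub_one {R : Type*} [CommRing R] {n q p : R}
    (h : n ∣ q * p - 1) : n ∣ (q + 1) ^ 2 ↔ n ∣ q + p + 2 := by
  constructor <;> intro hn
  · rw [show q + p + 2 = p * (q + 1) ^ 2 - (q + 2) * (q * p - 1) by ring]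
    exact dvd_sub (hn.mul_left p) (h.mul_left (q + 2))
  · rw [show (q + 1) ^ 2 = q * (q + p + 2) - (q * p - 1) by ring]
    exact dvd_sub (hn.mul_left q) h

theorem dvd_add_add_two_and_ne_iff {n q p : ℤ} (hq : 0 ≤ q) (hqn : q < n) (hp : 0 ≤ p)
    (hpn : p < n) : n ∣ q + p + 2 ∧ q ≠ n - 1 ↔ q + p + 2 = n := by
  constructor
  · rintro ⟨⟨k, hk⟩, hne⟩
    have k_pos : 0 < k := by nlinarith
    have k_lt : k < 2 := by
      by_contra! hk2
      have : n * 2 ≤ n * k := by gcongr; omega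
      omega
    obtain rfl : k = 1 := by omega
    omega
  · intro h
    exact ⟨h ▸ dvd_rfl, by omega⟩

theorem isTChain_iff {L : List ℤ} (hne : L ≠ []) (hL : ∀ b ∈ L, 2 ≤ b) :
    IsTChain L ↔ hjNum L ∣ (hjDen L + 1) ^ 2 ∧ hjDen L ≠ hjNum L - 1 := by
  have den_pos := hjDen_pos hL hne
  have den_lt := hjDen_lt_hjNum hL
  have coprime := Int.isCoprime_iff_gcd_eq_one.mp (isCoprime_hjNum_hjDen L)
  -- In `IsTChain` the cast of `L` to `List ℚ` is elaborated through the list monad, as a `flatMap`.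
  have value : hj (L.map fun b => (b : ℚ)) = hjNum L / hjDen L := by
    simpa [← List.map_eq_flatMap, Function.comp_def] using hj_map_intCast hL
  constructor
  · rintro ⟨-, n, q, ⟨hq, _, hnq, hdvd, hne'⟩, h⟩
    have same_fraction : (hjNum L : ℚ) / hjDen L = (n : ℤ) / (q : ℤ) := by
      rw [← value, h, Int.cast_natCast, Int.cast_natCast]
    obtain ⟨hn_eq, hq_eq⟩ :=
      Rat.div_int_inj (c := n) (d := q) den_pos (Int.natCast_pos.mpr hq) coprime hnq
        same_fraction
    rw [hn_eq, hq_eq]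
    exact ⟨mod_cast hdvd, by omega⟩
  · rintro ⟨hdvd, hne'⟩
    lift hjNum L to ℕ using by omega with n
    lift hjDen L to ℕ using by omega with q
    refine ⟨hL, n, q, ⟨by omega, by omega, coprime, mod_cast hdvd, by omega⟩, ?_⟩
    rwa [Int.cast_natCast, Int.cast_natCast] at value

theorem isTChain_iff_hjDen_add_hjDen_reverse {L : List ℤ} (hne : L ≠ [])
    (hL : ∀ b ∈ L, 2 ≤ b) : IsTChain L ↔ hjDen L + hjDen L.reverse + 2 = hjNum L := by
  have hL_rev : ∀ b ∈ L.reverse, 2 ≤ b := fun b hb => hL b (List.mem_reverse.mp hb)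
  have inverse : hjNum L ∣ hjDen L * hjDen L.reverse - 1 :=
    ⟨-transferMatrix L 1 1, by linear_combination hjDen_mul_hjDen_reverse L⟩
  rw [isTChain_iff hne hL, dvd_add_one_sq_iff_of_dvd_mul_sub_one inverse]
  exact dvd_add_add_two_and_ne_iff (hjDen_nonneg hL) (hjDen_lt_hjNum hL)
    (hjDen_nonneg hL_rev) (hjNum_reverse L ▸ hjDen_lt_hjNum hL_rev)

end TFraction

section LogDiscrepancy

variable {L : List ℤ} {α : ℕ → ℚ}

theorem IsLogDisc.hjNum_mul_last (hα : IsLogDisc L α) :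
    hjNum L * α L.length = hjDen L.reverse + 1 := by
  obtain ⟨left, right, recursion⟩ := hα
  have top : (transferMatrix L 0 0 * α L.length + transferMatrix L 0 1 : ℚ) = 1 := by
    simpa [mulVec, dotProduct, left, right] using
      congrFun (transferMatrix_map_mulVec L α recursion) 0
  rw [hjNum, hjDen_reverse]
  push_cast
  linear_combination top

theorem IsLogDisc.hjNum_mul_first (hα : IsLogDisc L α) : hjNum L * α 1 = hjDen L + 1 := by
  have last := hα.hjNum_mul_last
  obtain ⟨-, right, recursion⟩ := hα
  have bottom : hjDen L * α L.length + transferMatrix L 1 1 = α 1 := by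
    simpa [hjDen, mulVec, dotProduct, right] using
      congrFun (transferMatrix_map_mulVec L α recursion) 1
  have det : (hjDen L * hjDen L.reverse : ℚ) = 1 - hjNum L * transferMatrix L 1 1 :=
    mod_cast hjDen_mul_hjDen_reverse L
  linear_combination -(hjNum L : ℚ) * bottom + hjDen L * last + det

theorem IsLogDisc.first_add_last_eq_one_iff (hα : IsLogDisc L α) (hnum : hjNum L ≠ 0) :
    α 1 + α L.length = 1 ↔ hjDen L + hjDen L.reverse + 2 = hjNum L := by
  have hnum' : (hjNum L : ℚ) ≠ 0 := mod_cast hnum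
  have sum : (hjNum L : ℚ) * (α 1 + α L.length) = hjDen L + hjDen L.reverse + 2 := by
    linear_combination hα.hjNum_mul_first + hα.hjNum_mul_last
  rw [← mul_right_inj' hnum', sum, mul_one]
  norm_cast

end LogDiscrepancy

/-- Let `[b_1,…,b_ρ]` (ρ ≥ 1, all `b_i ≥ 2`) have log discrepancies `α_1,…,α_ρ`.
Then `[b_1,…,b_ρ]` is a T-chain iff `α_1 + α_ρ = 1`. -/
theorem tchain_iff_log_discrepancies (L : List ℤ) (hne : L ≠ [])
    (hL2 : ∀ b ∈ L, 2 ≤ b) (α : ℕ → ℚ) (hα : IsLogDisc L α) :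
    IsTChain L ↔ α 1 + α L.length = 1 := by
  rw [isTChain_iff_hjDen_add_hjDen_reverse hne hL2,
    hα.first_add_last_eq_one_iff (hjNum_pos hL2).ne']
end

section
/- Let [a_1,…,a_r] be a T-chain with Hirzebruch–Jung value n/q. Then Σ_{i=1}^{r} a_i = 3r + 2 − β(n/q); here β(n/q) is a positive integer. -/
/-- `g = gcd(n, q+1)`. -/
def Tg (n q : ℕ) : ℕ := Nat.gcd n (q + 1)

/-- `β(n/q) = gcd(n, q+1)² / n ∈ ℚ`. -/
def Tbeta (n q : ℕ) : ℚ := (Tg n q : ℚ) ^ 2 / (n : ℚ)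

theorem one_lt_hj_cons {b : ℚ} {l : List ℚ} (hl : ∀ x ∈ b :: l, 2 ≤ x) : 1 < hj (b :: l) := by
  obtain ⟨two_le_b, hl⟩ := List.forall_mem_cons.1 hl
  induction l generalizing b with
  | nil =>
    rw [hj, hj, div_zero, sub_zero]
    exact one_lt_two.trans_le two_le_b
  | cons c l ih =>
    obtain ⟨two_le_c, two_le_tail⟩ := List.forall_mem_cons.1 hl
    have inv_lt_one : (hj (c :: l))⁻¹ < 1 :=
      inv_lt_one_of_one_lt₀ (ih hl two_le_c two_le_tail)
    rw [hj, one_div]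
    linarith

theorem inv_hj_mem_Ico {l : List ℚ} (hl : ∀ x ∈ l, 2 ≤ x) : (hj l)⁻¹ ∈ Set.Ico 0 1 := by
  cases l with
  | nil => simp [hj]
  | cons b l =>
    have one_lt := one_lt_hj_cons hl
    exact ⟨inv_nonneg.2 (zero_le_one.trans one_lt.le), inv_lt_one_of_one_lt₀ one_lt⟩

theorem two_le_of_mem_map_intCast {L : List ℤ} (hL : ∀ a ∈ L, 2 ≤ a) :
    ∀ x ∈ L.map (Int.cast : ℤ → ℚ), 2 ≤ x := by
  rw [List.forall_mem_map]
  exact fun a ha => mod_cast hL a ha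

theorem ceil_hj_cons {b : ℤ} {L : List ℤ} (hL : ∀ a ∈ L, 2 ≤ a) :
    ⌈hj ((b :: L).map Int.cast)⌉ = b := by
  obtain ⟨inv_nonneg, inv_lt_one⟩ := inv_hj_mem_Ico (two_le_of_mem_map_intCast hL)
  rw [List.map_cons, hj, one_div, Int.ceil_eq_iff]
  constructor <;> linarith

theorem injOn_hj_map_intCast :
    Set.InjOn (fun L : List ℤ => hj (L.map Int.cast)) {L | ∀ a ∈ L, 2 ≤ a} := by
  intro L hL L' hL' h
  induction L generalizing L' with
  | nil =>
    cases L' with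
    | nil => rfl
    | cons b' L' =>
      exact absurd h (zero_lt_one.trans (one_lt_hj_cons (two_le_of_mem_map_intCast hL'))).ne
  | cons b L ih =>
    cases L' with
    | nil => exact absurd h (zero_lt_one.trans (one_lt_hj_cons (two_le_of_mem_map_intCast hL))).ne'
    | cons b' L' =>
      obtain ⟨-, tail_mem⟩ := List.forall_mem_cons.1 hL
      obtain ⟨-, tail_mem'⟩ := List.forall_mem_cons.1 hL'
      obtain rfl : b = b' := by
        rw [← ceil_hj_cons (b := b) tail_mem, ← ceil_hj_cons (b := b') tail_mem']
        exact congrArg Int.ceil h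
      have tails : hj (L.map Int.cast) = hj (L'.map Int.cast) := by
        simpa only [List.map_cons, hj, one_div, sub_right_inj, inv_inj] using h
      rw [ih tail_mem tail_mem' tails]

/-- The product of the matrices `!![b, -1; 1, 0]` over the entries `b` of a chain. As the Möbius
transformation of a factor is `x ↦ b - 1 / x`, the first column of the product consists of a
numerator and a denominator of the continued fraction. -/
def hjMatrix (L : List ℤ) : Matrix (Fin 2) (Fin 2) ℤ :=
  (L.map fun b => !![b, -1; 1, 0]).prod

theorem hjMatrix_nil : hjMatrix [] = 1 := rfl

theorem hjMatrix_cons (b : ℤ) (L : List ℤ) : hjMatrix (b :: L) = !![b, -1; 1, 0] * hjMatrix L :=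
  List.prod_cons

theorem hjMatrix_append (L L' : List ℤ) : hjMatrix (L ++ L') = hjMatrix L * hjMatrix L' := by
  simp only [hjMatrix, List.map_append, List.prod_append]

theorem hjMatrix_singleton (b : ℤ) : hjMatrix [b] = !![b, -1; 1, 0] :=
  List.prod_singleton

theorem hjMatrix_cons_add_one (b : ℤ) (L : List ℤ) :
    hjMatrix ((b + 1) :: L) = !![1, 1; 0, 1] * hjMatrix (b :: L) := by
  simp only [hjMatrix_cons, ← mul_assoc, Matrix.mul_fin_two]
  norm_num

theorem hjMatrix_replicate_two (k : ℕ) :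
    hjMatrix (List.replicate k 2) = !![(k : ℤ) + 1, -k; k, 1 - k] := by
  induction k with
  | zero => simp [hjMatrix_nil, Matrix.one_fin_two]
  | succ k ih =>
    rw [List.replicate_succ, hjMatrix_cons, ih, Matrix.mul_fin_two]
    ext i j
    fin_cases i <;> fin_cases j <;> simp <;> ring

theorem hjMatrix_reverse (L : List ℤ) :
    hjMatrix L.reverse =
      !![hjMatrix L 0 0, -hjMatrix L 1 0; -hjMatrix L 0 1, hjMatrix L 1 1] := by
  induction L with
  | nil => simp [hjMatrix_nil, Matrix.one_fin_two]
  | cons b L ih =>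
    rw [List.reverse_cons, hjMatrix_append, hjMatrix_singleton, ih, hjMatrix_cons,
      Matrix.eta_fin_two (hjMatrix L), Matrix.mul_fin_two, Matrix.mul_fin_two]
    ext i j
    fin_cases i <;> fin_cases j <;> simp <;> ring

theorem hjMatrix_mul_inv_hj {L : List ℤ} (hL : ∀ a ∈ L, 2 ≤ a) :
    hjMatrix L 0 0 * (hj (L.map Int.cast))⁻¹ = hjMatrix L 1 0 := by
  induction L with
  | nil => simp [hjMatrix_nil, hj]
  | cons b L ih =>
    have hj_ne_zero : hj ((b :: L).map Int.cast) ≠ 0 :=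
      (zero_lt_one.trans (one_lt_hj_cons (two_le_of_mem_map_intCast hL))).ne'
    have numerator : hjMatrix (b :: L) 0 0 = b * hjMatrix L 0 0 - hjMatrix L 1 0 := by
      simp [hjMatrix_cons, Matrix.mul_apply, sub_eq_add_neg]
    have denominator : hjMatrix (b :: L) 1 0 = hjMatrix L 0 0 := by
      simp [hjMatrix_cons, Matrix.mul_apply]
    rw [mul_inv_eq_iff_eq_mul₀ hj_ne_zero, numerator, denominator, List.map_cons, hj, one_div]
    push_cast
    linear_combination ih (List.forall_mem_cons.1 hL).2

/-- `KSBChain d a b L` says that the Kollár–Shepherd-Barron algorithm produces the chain `L`, with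
`a` and `b` recording the moves so that the value of `L` is `d m² / (d m a - 1)` for `m = a + b`.
The move that prepends `2` and increments the last entry is `grow` conjugated by `reverse`. -/
inductive KSBChain : ℕ → ℕ → ℕ → List ℤ → Prop
  | four : KSBChain 1 1 1 [4]
  | three_twos_three (k : ℕ) : KSBChain (k + 2) 1 1 (3 :: (List.replicate k 2 ++ [3]))
  | grow {d a b : ℕ} {c : ℤ} {L : List ℤ} (h : KSBChain d a b (c :: L)) :
      KSBChain d a (a + b) ((c + 1) :: (L ++ [2]))
  | reverse {d a b : ℕ} {L : List ℤ} (h : KSBChain d a b L) : KSBChain d b a L.reverse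

namespace KSBChain

variable {d a b : ℕ} {L : List ℤ}

theorem ne_nil (h : KSBChain d a b L) : L ≠ [] := by
  induction h with
  | four | three_twos_three | grow => exact List.cons_ne_nil _ _
  | reverse _ ih => exact List.reverse_ne_nil_iff.2 ih

theorem pos (h : KSBChain d a b L) : 0 < d ∧ 0 < a ∧ 0 < b := by
  induction h <;> omega

theorem two_le (h : KSBChain d a b L) : ∀ x ∈ L, 2 ≤ x := by
  induction h with
  | four => simp
  | three_twos_three k => simp +contextual [or_imp]
  | grow _ ih =>
    simp only [List.forall_mem_cons, List.forall_mem_append] at ih ⊢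
    exact ⟨by linarith [ih.1], ih.2, le_rfl, by simp⟩
  | reverse _ ih => simpa only [List.mem_reverse] using ih

theorem sum_eq (h : KSBChain d a b L) : L.sum = 3 * L.length + 2 - d := by
  induction h with
  | four => simp
  | three_twos_three k =>
    simp only [List.sum_cons, List.sum_append, List.sum_replicate, List.sum_nil, nsmul_eq_mul,
      List.length_cons, List.length_append, List.length_replicate, List.length_nil]
    push_cast
    ring
  | grow _ ih =>
    simp only [List.sum_cons, List.length_cons, List.sum_append, List.length_append,
      List.sum_nil, List.length_nil] at ih ⊢
    push_cast at ih ⊢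
    linarith
  | reverse _ ih => rwa [List.sum_reverse, List.length_reverse]

theorem hjMatrix_eq (h : KSBChain d a b L) :
    hjMatrix L = !![(d : ℤ) * (a + b) ^ 2, 1 - d * (a + b) * b; d * (a + b) * a - 1,
      1 - d * a * b] := by
  induction h with
  | four => simp [hjMatrix_singleton]
  | three_twos_three k =>
    rw [hjMatrix_cons, hjMatrix_append, hjMatrix_singleton, hjMatrix_replicate_two,
      Matrix.mul_fin_two, Matrix.mul_fin_two]
    ext i j
    fin_cases i <;> fin_cases j <;> simp <;> ring
  | grow _ ih =>
    rw [← List.cons_append, hjMatrix_append, hjMatrix_singleton, hjMatrix_cons_add_one, ih,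
      Matrix.mul_fin_two, Matrix.mul_fin_two]
    ext i j
    fin_cases i <;> fin_cases j <;> simp <;> ring
  | reverse _ ih =>
    simp [hjMatrix_reverse, ih, add_comm, mul_right_comm]

theorem hj_eq (h : KSBChain d a b L) :
    hj (L.map Int.cast) = (d * (a + b) ^ 2) / (d * (a + b) * a - 1) := by
  have key : (d : ℚ) * (a + b) ^ 2 * (hj (L.map Int.cast))⁻¹ = d * (a + b) * a - 1 := by
    simpa [h.hjMatrix_eq] using hjMatrix_mul_inv_hj h.two_le
  obtain ⟨d_pos, a_pos, -⟩ := h.pos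
  have : (d : ℚ) * (a + b) ^ 2 ≠ 0 := by positivity
  rw [← key]
  field_simp

theorem exists_of_coprime (hd : 0 < d) (ha : 0 < a) (hb : 0 < b) (hab : a.Coprime b) :
    ∃ L, KSBChain d a b L := by
  induction hs : a + b using Nat.strong_induction_on generalizing a b with
  | _ s ih =>
  subst hs
  wlog hle : a ≤ b generalizing a b
  · obtain ⟨L, hL⟩ := this hb ha hab.symm (by rwa [add_comm b a]) (le_of_not_ge hle)
    exact ⟨L.reverse, hL.reverse⟩
  obtain ⟨c, rfl⟩ := Nat.exists_eq_add_of_le hle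
  rcases c.eq_zero_or_pos with rfl | hc
  · obtain rfl : a = 1 := by simpa using hab
    match d, hd with
    | 1, _ => exact ⟨_, four⟩
    | k + 2, _ => exact ⟨_, three_twos_three k⟩
  · obtain ⟨L, hL⟩ := ih (a + c) (by omega) ha hc (by simpa using hab) rfl
    obtain ⟨x, L, rfl⟩ := List.exists_cons_of_ne_nil hL.ne_nil
    exact ⟨_, hL.grow⟩

end KSBChain

theorem IsTFraction.exists_parameters {n q : ℕ} (h : IsTFraction n q) :
    ∃ d a b : ℕ, 0 < d ∧ 0 < a ∧ 0 < b ∧ a.Coprime b ∧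
      n = d * (a + b) ^ 2 ∧ q + 1 = d * (a + b) * a := by
  obtain ⟨-, hqn, -, hdvd, hne⟩ := h
  obtain ⟨m, a, hma, hn, hq⟩ := Nat.exists_coprime n (q + 1)
  set g := n.gcd (q + 1)
  have hg : 0 < g := Nat.gcd_pos_of_pos_right n q.succ_pos
  have m_dvd_g : m ∣ g := by
    have : m * g ∣ a ^ 2 * g * g := by
      rw [hn, hq] at hdvd
      convert hdvd using 1
      ring
    exact (hma.pow_right 2).dvd_of_dvd_mul_left (Nat.dvd_of_mul_dvd_mul_right hg this)
  obtain ⟨d, hgd⟩ := m_dvd_g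
  have a_lt_m : a < m := by
    have : a * g < m * g := by
      rw [← hn, ← hq]
      omega
    exact lt_of_mul_lt_mul_right this g.zero_le
  obtain ⟨b, rfl⟩ := Nat.exists_eq_add_of_le a_lt_m.le
  have d_pos : 0 < d := Nat.pos_of_mul_pos_left (hgd ▸ hg)
  have a_pos : 0 < a := pos_of_mul_pos_left (hq ▸ q.succ_pos : 0 < a * g) hg.le
  refine ⟨d, a, b, d_pos, a_pos, by omega, by simpa using hma.symm, ?_, ?_⟩
  · rw [hn, hgd]
    ring
  · rw [hq, hgd]
    ring

theorem Tbeta_eq {n q d a b : ℕ} (hab : a.Coprime b)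
    (hn : n = d * (a + b) ^ 2) (hq : q + 1 = d * (a + b) * a) : Tbeta n q = d := by
  have hg : Tg n q = d * (a + b) := by
    rw [Tg, hn, hq, sq, ← mul_assoc, Nat.gcd_mul_left]
    simp [hab.symm]
  have hm : (a : ℚ) + b ≠ 0 := by
    norm_cast
    intro h
    obtain ⟨rfl, rfl⟩ := Nat.add_eq_zero_iff.1 h
    exact zero_ne_one hab
  rw [Tbeta, hg, hn]
  push_cast
  field_simp

/-- Let `[a_1,…,a_r]` be a T-chain with Hirzebruch–Jung value `n/q`. Then
`Σ a_i = 3r + 2 − β(n/q)`, and `β(n/q)` is a positive integer. -/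
theorem tchain_sum (L : List ℤ) (n q : ℕ) (hL2 : ∀ a ∈ L, 2 ≤ a)
    (hT : IsTFraction n q)
    (hval : hj (L.map (fun a => (a : ℚ))) = (n : ℚ) / (q : ℚ)) :
    ∃ β : ℕ, 0 < β ∧ (β : ℚ) = Tbeta n q ∧
      L.sum = 3 * (L.length : ℤ) + 2 - (β : ℤ) := by
  obtain ⟨d, a, b, hd, ha, hb, hab, hn, hq⟩ := hT.exists_parameters
  obtain ⟨L', hL'⟩ := KSBChain.exists_of_coprime hd ha hb hab
  -- In `hval` the cast is a monadic coercion of the list `L`, and the mapped function is `id`.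
  have hj_L : hj (L.map Int.cast) = (n : ℚ) / q := by
    simpa [List.map_eq_flatMap] using hval
  have hj_L' : hj (L'.map Int.cast) = (n : ℚ) / q := by
    have n_eq : (n : ℚ) = d * (a + b) ^ 2 := mod_cast hn
    have q_eq : (q : ℚ) = d * (a + b) * a - 1 := eq_sub_of_add_eq (mod_cast hq)
    rw [hL'.hj_eq, n_eq, q_eq]
  obtain rfl : L = L' := injOn_hj_map_intCast hL2 hL'.two_le (hj_L.trans hj_L'.symm)
  exact ⟨d, hd, (Tbeta_eq hab hn hq).symm, hL'.sum_eq⟩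
end
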